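/- For every α ∈ [0,1], the vector D^{2−α} C D^{α} 𝟙 satisfies componentwise D^{2−α} C D^{α} 𝟙 ≥ −α² 𝟙, i.e. for every i ∈ {1,…,N}, (D^{2−α} C D^{α} 𝟙)_i ≥ −α², where 𝟙 = (1,…,1)ᵀ ∈ ℝ^N. -/

import Mathlib

open Real Matrix

noncomputable section

/-- Mesh size `h = 1/(N+1)`. -/
def hmesh (N : ℕ) : ℝ := 1 / (N + 1)

/-- Grid points `x_i = i·h`, `i = 1,…,N` (here `i : Fin N` corresponds to `i+1`). -/
def gridx (N : ℕ) (i : Fin N) : ℝ := ((i : ℕ) + 1) * hmesh N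

/-- `A = (1/h²)·tridiag(−1,2,−1)`. -/
def matA (N : ℕ) : Matrix (Fin N) (Fin N) ℝ := fun i j =>
  (1 / (hmesh N) ^ 2) *
    (if (i : ℕ) = (j : ℕ) then 2
     else if (i : ℕ) + 1 = (j : ℕ) ∨ (j : ℕ) + 1 = (i : ℕ) then -1 else 0)

/-- `B = (1/(2h))·tridiag(−1,0,1)`. -/
def matB (N : ℕ) : Matrix (Fin N) (Fin N) ℝ := fun i j =>
  (1 / (2 * hmesh N)) *
    (if (i : ℕ) + 1 = (j : ℕ) then 1
     else if (j : ℕ) + 1 = (i : ℕ) then -1 else 0)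

/-- `D = diag(x_1,…,x_N)`. -/
def matD (N : ℕ) : Matrix (Fin N) (Fin N) ℝ := Matrix.diagonal (gridx N)

/-- `D^β = diag(x_1^β,…,x_N^β)` (real powers). -/
def matDpow (N : ℕ) (β : ℝ) : Matrix (Fin N) (Fin N) ℝ :=
  Matrix.diagonal (fun i => gridx N i ^ β)

/-- `C = A − D⁻¹B`. -/
def matC (N : ℕ) : Matrix (Fin N) (Fin N) ℝ :=
  matA N - Matrix.diagonal (fun i => (gridx N i)⁻¹) * matB N

/-- `g(y) = sin(2y)/(2y)` for `y ≠ 0`, `g(0) = 1`. -/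
def gfun (y : ℝ) : ℝ := if y = 0 then 1 else Real.sin (2 * y) / (2 * y)

/-- `G(u) = diag(g(u_1),…,g(u_N))`. -/
def matG {N : ℕ} (u : Fin N → ℝ) : Matrix (Fin N) (Fin N) ℝ :=
  Matrix.diagonal (fun i => gfun (u i))

/-- The matrix `I + Δt(C + G(v)D⁻²)` of the semi-implicit Euler scheme. -/
def stepMat (N : ℕ) (Δt : ℝ) (v : Fin N → ℝ) : Matrix (Fin N) (Fin N) ℝ :=
  1 + Δt • (matC N + matG v * matDpow N (-2))

/-- Operator norm of a matrix induced by the maximum norm on `ℝ^N`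
(the Pi norm on `Fin N → ℝ` is the sup norm). -/
def opNormInf {N : ℕ} (M : Matrix (Fin N) (Fin N) ℝ) : ℝ :=
  ‖(LinearMap.toContinuousLinearMap (Matrix.mulVecLin M) :
      (Fin N → ℝ) →L[ℝ] (Fin N → ℝ))‖

end

/-- `(1 + t)^r + (1 - t)^r`. -/
noncomputable def rpowEven (r t : ℝ) : ℝ := (1 + t) ^ r + (1 - t) ^ r

/-- `(1 + t)^r - (1 - t)^r`. -/
noncomputable def rpowOdd (r t : ℝ) : ℝ := (1 + t) ^ r - (1 - t) ^ r

lemma hasDerivAt_one_add_rpow (r : ℝ) {t : ℝ} (ht : t ∈ Set.Ioo (-1 : ℝ) 1) :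
    HasDerivAt (fun t : ℝ => (1 + t) ^ r) (r * (1 + t) ^ (r - 1)) t := by
  have h := ((hasDerivAt_id t).const_add 1).rpow_const (p := r)
    (Or.inl (by have := ht.1; simp only [id]; linarith))
  simpa using h

lemma hasDerivAt_one_sub_rpow (r : ℝ) {t : ℝ} (ht : t ∈ Set.Ioo (-1 : ℝ) 1) :
    HasDerivAt (fun t : ℝ => (1 - t) ^ r) (-(r * (1 - t) ^ (r - 1))) t := by
  have h := ((hasDerivAt_id t).const_sub 1).rpow_const (p := r)
    (Or.inl (by have := ht.2; simp only [id]; linarith))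
  simpa using h

lemma hasDerivAt_rpowEven (r : ℝ) {t : ℝ} (ht : t ∈ Set.Ioo (-1 : ℝ) 1) :
    HasDerivAt (rpowEven r) (r * rpowOdd (r - 1) t) t := by
  refine ((hasDerivAt_one_add_rpow r ht).add (hasDerivAt_one_sub_rpow r ht)).congr_deriv ?_
  simp only [rpowOdd]; ring

lemma hasDerivAt_rpowOdd (r : ℝ) {t : ℝ} (ht : t ∈ Set.Ioo (-1 : ℝ) 1) :
    HasDerivAt (rpowOdd r) (r * rpowEven (r - 1) t) t := by
  refine ((hasDerivAt_one_add_rpow r ht).sub (hasDerivAt_one_sub_rpow r ht)).congr_deriv ?_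
  simp only [rpowEven]; ring

@[simp] lemma rpowEven_zero (r : ℝ) : rpowEven r 0 = 2 := by
  norm_num [rpowEven]

@[simp] lemma rpowOdd_zero (r : ℝ) : rpowOdd r 0 = 0 := by
  norm_num [rpowOdd]

lemma rpowOdd_nonpos {r t : ℝ} (hr : r ≤ 0) (ht : t ∈ Set.Ico (0 : ℝ) 1) : rpowOdd r t ≤ 0 :=
  sub_nonpos.2 (Real.rpow_le_rpow_of_nonpos (by linarith [ht.2]) (by linarith [ht.1]) hr)

lemma rpowEven_le_rpowEven_sub_one {r t : ℝ} (hr : r ≤ 1) (ht : t ∈ Set.Ico (0 : ℝ) 1) :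
    rpowEven r t ≤ rpowEven (r - 1) t := by
  have hp : (1 + t) ^ r = (1 + t) ^ (r - 1) * (1 + t) := by
    rw [Real.rpow_sub_one (by linarith [ht.1]), div_mul_cancel₀ _ (by linarith [ht.1])]
  have hq : (1 - t) ^ r = (1 - t) ^ (r - 1) * (1 - t) := by
    rw [Real.rpow_sub_one (by linarith [ht.2]), div_mul_cancel₀ _ (by linarith [ht.2])]
  have h := mul_nonpos_of_nonneg_of_nonpos ht.1 (rpowOdd_nonpos (r := r - 1) (by linarith) ht)
  simp only [rpowOdd, rpowEven, hp, hq] at h ⊢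
  linarith

/-- A function on `[0, 1)` vanishing at `0` with nonpositive derivative is nonpositive. -/
lemma nonpos_of_hasDerivAt_nonpos {f f' : ℝ → ℝ} (h0 : f 0 = 0)
    (hf : ∀ t ∈ Set.Ico (0 : ℝ) 1, HasDerivAt f (f' t) t)
    (hf' : ∀ t ∈ Set.Ico (0 : ℝ) 1, f' t ≤ 0) : ∀ t ∈ Set.Ico (0 : ℝ) 1, f t ≤ 0 := by
  have hanti : AntitoneOn f (Set.Ico 0 1) := by
    refine antitoneOn_of_deriv_nonpos (convex_Ico 0 1)
      (fun t ht => (hf t ht).continuousAt.continuousWithinAt)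
      (fun t ht => (hf t (interior_subset ht)).differentiableAt.differentiableWithinAt)
      (fun t ht => ?_)
    rw [(hf t (interior_subset ht)).deriv]
    exact hf' t (interior_subset ht)
  intro t ht
  simpa [h0] using hanti (Set.left_mem_Ico.2 one_pos) ht ht.1

lemma mem_Ioo_of_mem_Ico {t : ℝ} (ht : t ∈ Set.Ico (0 : ℝ) 1) : t ∈ Set.Ioo (-1 : ℝ) 1 :=
  ⟨by linarith [ht.1], ht.2⟩

lemma rpowOdd_combination_nonpos {r : ℝ} (hr : r ≤ 0) :
    ∀ t ∈ Set.Ico (0 : ℝ) 1, (r - 1) * rpowOdd r t - r * rpowOdd (r - 1) t ≤ 0 := by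
  refine nonpos_of_hasDerivAt_nonpos
    (f' := fun t => (r - 1) * (r * rpowEven (r - 1) t)
      - r * ((r - 1) * rpowEven (r - 1 - 1) t)) (by simp) (fun t ht => ?_) (fun t ht => ?_)
  · exact ((hasDerivAt_rpowOdd r (mem_Ioo_of_mem_Ico ht)).const_mul _).sub
      ((hasDerivAt_rpowOdd (r - 1) (mem_Ioo_of_mem_Ico ht)).const_mul _)
  · have h := rpowEven_le_rpowEven_sub_one (r := r - 1) (by linarith) ht
    have hc : 0 ≤ r * (r - 1) := mul_nonneg_of_nonpos_of_nonpos hr (by linarith)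
    nlinarith [mul_le_mul_of_nonneg_left h hc]

lemma half_rpowEven_add_le_of_lt_one {α : ℝ} (h0 : 0 ≤ α) (h1 : α ≤ 1) :
    ∀ t ∈ Set.Ico (0 : ℝ) 1,
      1 / 2 * rpowEven (α + 1) t + 1 / 2 * rpowEven α t - 2 - α ^ 2 * t ^ 2 ≤ 0 := by
  have hthird : ∀ t ∈ Set.Ico (0 : ℝ) 1,
      (α + 1) * α / 2 * ((α - 1) * rpowOdd (α - 1 - 1) t)
        + α * (α - 1) / 2 * ((α - 1 - 1) * rpowOdd (α - 1 - 1 - 1) t) ≤ 0 := by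
    intro t ht
    have hL := rpowOdd_combination_nonpos (r := α - 1 - 1) (by linarith) t ht
    have hT := rpowOdd_nonpos (r := α - 1 - 1) (by linarith) ht
    have hc : 0 ≤ α * (1 - α) := mul_nonneg h0 (by linarith)
    have hsum : 0 ≤ (α + 1) * rpowOdd (α - 1 - 1) t
        + (α - 1 - 1) * rpowOdd (α - 1 - 1 - 1) t := by
      nlinarith [mul_nonneg (sub_nonneg.2 h1) (neg_nonneg.2 hT)]
    nlinarith [mul_nonneg hc hsum]
  have hsecond : ∀ t ∈ Set.Ico (0 : ℝ) 1,
      (α + 1) * α / 2 * rpowEven (α - 1) t + α * (α - 1) / 2 * rpowEven (α - 1 - 1) t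
        - 2 * α ^ 2 ≤ 0 := by
    refine nonpos_of_hasDerivAt_nonpos (by simp; ring) (fun t ht => ?_) hthird
    exact (((hasDerivAt_rpowEven _ (mem_Ioo_of_mem_Ico ht)).const_mul _).add
      ((hasDerivAt_rpowEven _ (mem_Ioo_of_mem_Ico ht)).const_mul _)).sub_const _
  have hfirst : ∀ t ∈ Set.Ico (0 : ℝ) 1,
      (α + 1) / 2 * rpowOdd α t + α / 2 * rpowOdd (α - 1) t - 2 * α ^ 2 * t ≤ 0 := by
    refine nonpos_of_hasDerivAt_nonpos (by simp) (fun t ht => ?_) hsecond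
    refine ((((hasDerivAt_rpowOdd _ (mem_Ioo_of_mem_Ico ht)).const_mul _).add
      ((hasDerivAt_rpowOdd _ (mem_Ioo_of_mem_Ico ht)).const_mul _)).sub
      ((hasDerivAt_id t).const_mul _)).congr_deriv ?_
    ring
  refine nonpos_of_hasDerivAt_nonpos (by norm_num) (fun t ht => ?_) hfirst
  refine (((((hasDerivAt_rpowEven _ (mem_Ioo_of_mem_Ico ht)).const_mul _).add
    ((hasDerivAt_rpowEven _ (mem_Ioo_of_mem_Ico ht)).const_mul _)).sub_const _).sub
    ((hasDerivAt_pow 2 t).const_mul _)).congr_deriv ?_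
  simp only [add_sub_cancel_right]
  push_cast
  ring

/-- The scalar inequality behind the componentwise estimate, with `t = 1 / i`. -/
lemma rpow_stencil_le {α t : ℝ} (hα : α ∈ Set.Icc (0 : ℝ) 1) (ht : t ∈ Set.Icc (0 : ℝ) 1) :
    (1 + t / 2) * (1 + t) ^ α + (1 - t / 2) * (1 - t) ^ α ≤ 2 + α ^ 2 * t ^ 2 := by
  obtain ⟨h0, h1⟩ := hα
  rcases h0.eq_or_lt with rfl | hpos
  · norm_num
  have hIco : Set.Ico (0 : ℝ) 1 ⊆
      {t | (1 + t / 2) * (1 + t) ^ α + (1 - t / 2) * (1 - t) ^ α ≤ 2 + α ^ 2 * t ^ 2} := by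
    intro s hs
    have h := half_rpowEven_add_le_of_lt_one h0 h1 s hs
    rw [rpowEven, rpowEven, Real.rpow_add_one (by linarith [hs.1]),
      Real.rpow_add_one (by linarith [hs.2])] at h
    simp only [Set.mem_ofPred_eq]
    linarith
  have hp : Continuous fun t : ℝ => (1 + t) ^ α :=
    (continuous_const.add continuous_id).rpow_const fun _ => Or.inr h0
  have hq : Continuous fun t : ℝ => (1 - t) ^ α :=
    (continuous_const.sub continuous_id).rpow_const fun _ => Or.inr h0
  have hclosed : IsClosed
      {t : ℝ | (1 + t / 2) * (1 + t) ^ α + (1 - t / 2) * (1 - t) ^ α ≤ 2 + α ^ 2 * t ^ 2} :=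
    isClosed_le (by fun_prop) (by fun_prop)
  have h := hclosed.closure_subset_iff.2 hIco
  rw [closure_Ico zero_ne_one] at h
  exact h ht

lemma hmesh_pos (N : ℕ) : 0 < hmesh N := by
  unfold hmesh; positivity

lemma gridx_pos (N : ℕ) (i : Fin N) : 0 < gridx N i :=
  mul_pos (by positivity) (hmesh_pos N)

/-- The sum over the (at most one) index satisfying `p` is bounded by any
nonnegative bound for the selected terms. -/
lemma sum_ite_le_of_subsingleton {ι : Type*} [Fintype ι] (p : ι → Prop) [DecidablePred p]
    (hp : ∀ j k, p j → p k → j = k) (f : ι → ℝ) {b : ℝ} (hb : 0 ≤ b) (hf : ∀ j, p j → f j ≤ b) :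
    ∑ j, (if p j then f j else 0) ≤ b := by
  by_cases h : ∃ j, p j
  · obtain ⟨j, hj⟩ := h
    rw [Finset.sum_eq_single j (fun k _ hk => if_neg fun hpk => hk (hp k j hpk hj))
      (by simp), if_pos hj]
    exact hf j hj
  · rw [Finset.sum_eq_zero fun j _ => if_neg fun hj => h ⟨j, hj⟩]
    exact hb

lemma matC_mul_sum (N : ℕ) (i : Fin N) (v : Fin N → ℝ) :
    ∑ j, matC N i j * v j = 2 / hmesh N ^ 2 * v i
      - (1 / hmesh N ^ 2 + 1 / (2 * hmesh N * gridx N i)) *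
          ∑ j : Fin N, (if (i : ℕ) + 1 = (j : ℕ) then v j else 0)
      - (1 / hmesh N ^ 2 - 1 / (2 * hmesh N * gridx N i)) *
          ∑ j : Fin N, (if (j : ℕ) + 1 = (i : ℕ) then v j else 0) := by
  have hdiag : v i = ∑ j : Fin N, (if (i : ℕ) = (j : ℕ) then v j else 0) := by
    simp [Fin.val_inj]
  rw [hdiag, Finset.mul_sum, Finset.mul_sum, Finset.mul_sum, ← Finset.sum_sub_distrib,
    ← Finset.sum_sub_distrib]
  refine Finset.sum_congr rfl fun j _ => ?_
  have hh := (hmesh_pos N).ne'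
  have hx := (gridx_pos N i).ne'
  simp only [matC, Matrix.sub_apply, Matrix.diagonal_mul, matA, matB]
  split_ifs <;> first | omega | (field_simp; try ring)

/-- Componentwise estimate `D^{2−α} C D^{α} 𝟙 ≥ −α² 𝟙` for all `α ∈ [0,1]`. -/
theorem stmt3 {N : ℕ} (hN : 1 ≤ N) (α : ℝ) (hα : α ∈ Set.Icc (0 : ℝ) 1) :
    ∀ i : Fin N,
      -(α ^ 2) ≤ (matDpow N (2 - α) * matC N * matDpow N α).mulVec (fun _ => 1) i := by
  intro i
  have hrow : (matDpow N (2 - α) * matC N * matDpow N α).mulVec (fun _ => 1) i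
      = gridx N i ^ (2 - α) * ∑ j, matC N i j * gridx N j ^ α := by
    simp [Matrix.mulVec, dotProduct, matDpow, Matrix.mul_diagonal, Matrix.diagonal_mul,
      Finset.mul_sum, mul_assoc]
  rw [hrow, matC_mul_sum]
  have hh := hmesh_pos N
  have hx := gridx_pos N i
  set n : ℝ := (i : ℕ) + 1 with hn
  have hn1 : 1 ≤ n := by rw [hn]; linarith [(i : ℕ).cast_nonneg (α := ℝ)]
  have hxn : gridx N i = n * hmesh N := rfl
  set x := gridx N i
  have ht : 1 / n ∈ Set.Icc (0 : ℝ) 1 := ⟨by positivity, (div_le_one (by linarith)).2 hn1⟩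
  have hR : ∑ j : Fin N, (if (i : ℕ) + 1 = (j : ℕ) then gridx N j ^ α else 0)
      ≤ x ^ α * (1 + 1 / n) ^ α := by
    refine sum_ite_le_of_subsingleton _ (fun j k hj hk => Fin.ext (by omega)) _
      (by positivity) (fun j hj => le_of_eq ?_)
    rw [← Real.mul_rpow hx.le (by positivity), gridx, ← hj, hxn]
    congr 1
    push_cast
    rw [← hn]
    field_simp
  have hL : ∑ j : Fin N, (if (j : ℕ) + 1 = (i : ℕ) then gridx N j ^ α else 0)
      ≤ x ^ α * (1 - 1 / n) ^ α := by
    refine sum_ite_le_of_subsingleton _ (fun j k hj hk => Fin.ext (by omega)) _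
      (mul_nonneg (by positivity) (Real.rpow_nonneg (by linarith [ht.2]) _))
      (fun j hj => le_of_eq ?_)
    rw [← Real.mul_rpow hx.le (by linarith [ht.2]), gridx, hxn]
    congr 1
    have hij : ((j : ℕ) : ℝ) + 1 = n - 1 := by
      rw [hn, ← hj]; push_cast; ring
    rw [hij]
    field_simp
  have hs := rpow_stencil_le hα ht
  set R := ∑ j : Fin N, (if (i : ℕ) + 1 = (j : ℕ) then gridx N j ^ α else 0)
  set L := ∑ j : Fin N, (if (j : ℕ) + 1 = (i : ℕ) then gridx N j ^ α else 0)
  have hcR : 1 / hmesh N ^ 2 + 1 / (2 * hmesh N * x) = 1 / hmesh N ^ 2 * (1 + 1 / n / 2) := by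
    rw [hxn]; field_simp
  have hcL : 1 / hmesh N ^ 2 - 1 / (2 * hmesh N * x) = 1 / hmesh N ^ 2 * (1 - 1 / n / 2) := by
    rw [hxn]; field_simp
  have hpow : x ^ (2 - α) * x ^ α = n ^ 2 * hmesh N ^ 2 := by
    rw [← Real.rpow_add hx, sub_add_cancel, Real.rpow_two, hxn]; ring
  rw [hcR, hcL]
  have hR' := mul_le_mul_of_nonneg_left hR (by linarith [ht.1] : 0 ≤ 1 + 1 / n / 2)
  have hL' := mul_le_mul_of_nonneg_left hL (by linarith [ht.2] : 0 ≤ 1 - 1 / n / 2)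
  have hbound : -(α ^ 2 * (1 / n) ^ 2) * x ^ α
      ≤ 2 * x ^ α - (1 + 1 / n / 2) * R - (1 - 1 / n / 2) * L := by
    have := mul_le_mul_of_nonneg_left hs (by positivity : 0 ≤ x ^ α)
    linarith
  calc -(α ^ 2) = x ^ (2 - α) / hmesh N ^ 2 * (-(α ^ 2 * (1 / n) ^ 2) * x ^ α) := by
        have : x ^ (2 - α) / hmesh N ^ 2 * (-(α ^ 2 * (1 / n) ^ 2) * x ^ α)
            = -(α ^ 2 * (1 / n) ^ 2) * (x ^ (2 - α) * x ^ α) / hmesh N ^ 2 := by ring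
        rw [this, hpow]
        field_simp
    _ ≤ x ^ (2 - α) / hmesh N ^ 2
          * (2 * x ^ α - (1 + 1 / n / 2) * R - (1 - 1 / n / 2) * L) :=
        mul_le_mul_of_nonneg_left hbound (by positivity)
    _ = _ := by ring
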